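/- Proposition 5 (small cases): Let ψ be a pure n-qubit state satisfying the preferred-basis condition. If n = 3 and M(ρ_ψ) > 2, then ψ is genuinely 3-partite entangled; if n = 4 and M(ρ_ψ) > 4, then ψ is genuinely 4-partite entangled. (Genuinely n-partite entangled means: ψ is not a product of two pure states over any bipartition of the n qubits into two nonempty sets.) -/

import Mathlib

noncomputable def pauli : ℕ → Matrix (Fin 2) (Fin 2) ℂ
  | 1 => !![0, 1; 1, 0]
  | 2 => !![0, -Complex.I; Complex.I, 0]
  | 3 => !![1, 0; 0, -1]
  | _ => 1

/-- The `ι`-fold Kronecker product of single-qubit operators `pauli (f k)`. -/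
noncomputable def kronOp {ι : Type*} [Fintype ι] [DecidableEq ι] (f : ι → ℕ) :
    Matrix (ι → Fin 2) (ι → Fin 2) ℂ :=
  Matrix.of fun x y => ∏ k, pauli (f k) (x k) (y k)

/-- Two-body correlation `T^{kl}_{ij}(ρ)`. -/
noncomputable def corr {ι : Type*} [Fintype ι] [DecidableEq ι]
    (ρ : Matrix (ι → Fin 2) (ι → Fin 2) ℂ) (k l : ι) (i j : ℕ) : ℝ :=
  ((ρ * kronOp (fun q => if q = k then i else if q = l then j else 0)).trace).re

/-- Single-qubit Bloch vector component `b^{(q)}_i(ρ)`. -/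
noncomputable def bloch {ι : Type*} [Fintype ι] [DecidableEq ι]
    (ρ : Matrix (ι → Fin 2) (ι → Fin 2) ℂ) (q : ι) (i : ℕ) : ℝ :=
  ((ρ * kronOp (fun p => if p = q then i else 0)).trace).re

/-- `M_{kl}(ρ)`. -/
noncomputable def Mkl {ι : Type*} [Fintype ι] [DecidableEq ι]
    (ρ : Matrix (ι → Fin 2) (ι → Fin 2) ℂ) (k l : ι) : ℝ :=
  ∑ i ∈ Finset.Icc 1 2, ∑ j ∈ Finset.Icc 1 2, (corr ρ k l i j) ^ 2

/-- `M(ρ) = Σ_{k<l} M_{kl}(ρ)`. -/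
noncomputable def Mtot {ι : Type*} [Fintype ι] [LinearOrder ι]
    (ρ : Matrix (ι → Fin 2) (ι → Fin 2) ℂ) : ℝ :=
  ∑ p ∈ Finset.univ.filter (fun p : ι × ι => p.1 < p.2), Mkl ρ p.1 p.2

/-- Density matrix of a pure state `ψ`: `ρ_ψ = ψ ψ†`. -/
noncomputable def pureDensity {ι : Type*} [Fintype ι] [DecidableEq ι]
    (ψ : (ι → Fin 2) → ℂ) : Matrix (ι → Fin 2) (ι → Fin 2) ℂ :=
  Matrix.of fun x y => ψ x * (starRingEnd ℂ) (ψ y)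

/-- `ψ` is a unit vector. -/
def UnitVec {ι : Type*} [Fintype ι] [DecidableEq ι] (ψ : (ι → Fin 2) → ℂ) : Prop :=
  ∑ x, Complex.normSq (ψ x) = 1

/-- Preferred-basis condition: all transverse Bloch components vanish. -/
def PreferredBasis {ι : Type*} [Fintype ι] [DecidableEq ι]
    (ρ : Matrix (ι → Fin 2) (ι → Fin 2) ℂ) : Prop :=
  ∀ q : ι, bloch ρ q 1 = 0 ∧ bloch ρ q 2 = 0

/-- `P` is a partition of `Fin n` into `k` nonempty blocks. -/
def IsPartition {n k : ℕ} (P : Fin k → Finset (Fin n)) : Prop :=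
  (∀ m, (P m).Nonempty) ∧ (∀ m m', m ≠ m' → Disjoint (P m) (P m')) ∧
    ∀ q : Fin n, ∃ m, q ∈ P m

/-- Restriction of an `n`-bit string to a block of qubits. -/
def restrictB {n : ℕ} (S : Finset (Fin n)) (f : Fin n → Fin 2) : (↥S → Fin 2) :=
  fun q => f q.val

/-- `ψ` is the tensor product, under the canonical qubit-reordering isomorphism,
of pure states on the blocks of `P`. -/
def IsProductOver {n k : ℕ} (ψ : (Fin n → Fin 2) → ℂ) (P : Fin k → Finset (Fin n)) : Prop :=
  ∃ φ : (m : Fin k) → ((↥(P m) → Fin 2) → ℂ),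
    (∀ m, UnitVec (φ m)) ∧ ∀ f : Fin n → Fin 2, ψ f = ∏ m, φ m (restrictB (P m) f)

/-!
Weighting a family of anticommuting self-adjoint involutions `aᵢ` by their means `⟨aᵢ⟩` gives `B`
with `B² = ⟨B⟩ = ∑ ⟨aᵢ⟩²`, so `0 ≤ ⟨(1 - B)²⟩` says `∑ ⟨aᵢ⟩² ≤ 1`. For three qubits `k`, `l`, `m`,
the Pauli products `σᵢ ⊗ σⱼ` on `k` and a second qubit, chosen to be `l` for `i = 1` and `m` for
`i = 2`, form such a family. Adding the same bound with `l` and `m` exchanged yields the monogamy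
relation `M_{kl} + M_{km} ≤ 2`. On `k` and `l` alone, `σᵢ ⊗ σ₁` and `σᵢ ⊗ σ₂` form such a family for
each `i`, so `M_{kl} ≤ 2`.

In a product state, correlations between different blocks are products of Bloch components, so in
the preferred basis only pairs inside one block contribute to `M`. By monogamy a block of `s ≠ 2`
qubits contributes at most `s.choose 2`, and a block of two contributes at most `2`. Hence `M ≤ 2`
for the split `1 + 2`, and `M ≤ max (0 + 3) (2 + 2)` for the splits of four qubits.
-/

open Finset Matrix
open scoped ComplexOrder

section Anticommuting

variable {ι A : Type*} [Ring A] [Algebra ℝ A] {s : Finset ι} {a : ι → A}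

lemma sum_smul_mul_self_of_anticommute (c : ι → ℝ) (hsq : ∀ i ∈ s, a i * a i = 1)
    (hanti : (s : Set ι).Pairwise fun i j => a i * a j = -(a j * a i)) :
    (∑ i ∈ s, c i • a i) * ∑ i ∈ s, c i • a i = (∑ i ∈ s, c i ^ 2) • (1 : A) := by
  classical
  induction s using Finset.induction_on with
  | empty => simp
  | insert i s hi ih =>
    rw [coe_insert, Set.pairwise_insert_of_notMem (by simpa using hi)] at hanti
    have hcross : (c i • a i) * ∑ j ∈ s, c j • a j = -((∑ j ∈ s, c j • a j) * (c i • a i)) := by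
      rw [mul_sum, sum_mul, ← sum_neg_distrib]
      refine sum_congr rfl fun j hj => ?_
      simp only [smul_mul_smul_comm, (hanti.2 j hj).1, mul_comm (c i), smul_neg]
    have hdiag : (c i • a i) * (c i • a i) = c i ^ 2 • (1 : A) := by
      rw [smul_mul_smul_comm, hsq i (mem_insert_self i s), sq]
    rw [sum_insert hi, sum_insert hi, add_smul, add_mul, mul_add, mul_add, hdiag, hcross,
      ih (fun j hj => hsq j (mem_insert_of_mem hj)) hanti.1]
    abel

theorem sum_sq_map_le_one_of_anticommute [StarRing A] [StarModule ℝ A] {ω : A →ₗ[ℝ] ℝ}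
    (hω : ∀ b, 0 ≤ ω (star b * b)) (hω_one : ω 1 = 1) (hsa : ∀ i ∈ s, IsSelfAdjoint (a i))
    (hsq : ∀ i ∈ s, a i * a i = 1)
    (hanti : (s : Set ι).Pairwise fun i j => a i * a j = -(a j * a i)) :
    ∑ i ∈ s, ω (a i) ^ 2 ≤ 1 := by
  set B := ∑ i ∈ s, ω (a i) • a i with hB
  have hB_star : star B = B := by
    simp only [hB, star_sum, star_smul, star_trivial]
    exact sum_congr rfl fun i hi => by rw [(hsa i hi).star_eq]
  have hB_map : ω B = ∑ i ∈ s, ω (a i) ^ 2 := by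
    simp [hB, sq]
  have hB_sq : B * B = (∑ i ∈ s, ω (a i) ^ 2) • (1 : A) :=
    sum_smul_mul_self_of_anticommute _ hsq hanti
  have hpos := hω (1 - B)
  have hexpand : star (1 - B) * (1 - B) = 1 - (2 : ℝ) • B + B * B := by
    rw [star_sub, star_one, hB_star, two_smul]
    noncomm_ring
  rw [hexpand, hB_sq, map_add, map_sub, map_smul, map_smul, hω_one, hB_map] at hpos
  simp only [smul_eq_mul] at hpos
  linarith

end Anticommuting

section Pauli

lemma pauli_mul_self (a : ℕ) : pauli a * pauli a = 1 := by
  unfold pauli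
  split <;> ext i j <;> fin_cases i <;> fin_cases j <;> simp [mul_apply]

lemma pauli_isHermitian (a : ℕ) : (pauli a).IsHermitian := by
  unfold pauli
  split <;> ext i j <;> fin_cases i <;> fin_cases j <;> simp

lemma pauli_zero : pauli 0 = 1 := rfl

lemma pauli_anticommute {a b : ℕ} (ha : a ∈ Icc 1 3) (hb : b ∈ Icc 1 3) (hab : a ≠ b) :
    pauli a * pauli b = -(pauli b * pauli a) := by
  rw [mem_Icc] at ha hb
  obtain ⟨ha₁, ha₃⟩ := ha
  obtain ⟨hb₁, hb₃⟩ := hb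
  interval_cases a <;> interval_cases b <;> first | exact absurd rfl hab | skip
  all_goals ext i j; fin_cases i <;> fin_cases j <;> simp [pauli, mul_apply]

variable {ι : Type*} [Fintype ι] [DecidableEq ι]

lemma kronOp_mul_kronOp_apply (f g : ι → ℕ) (x y : ι → Fin 2) :
    (kronOp f * kronOp g) x y = ∏ q, (pauli (f q) * pauli (g q)) (x q) (y q) := by
  simp only [kronOp, mul_apply, of_apply, ← prod_mul_distrib, prod_univ_sum,
    Fintype.piFinset_univ]

lemma kronOp_zero : kronOp (0 : ι → ℕ) = 1 := by
  ext x y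
  simp [kronOp, pauli_zero, one_apply, Fintype.prod_ite_zero, funext_iff]

lemma kronOp_mul_self (f : ι → ℕ) : kronOp f * kronOp f = 1 := by
  ext x y
  simp [kronOp_mul_kronOp_apply, pauli_mul_self, one_apply, Fintype.prod_ite_zero, funext_iff]

lemma kronOp_isHermitian (f : ι → ℕ) : (kronOp f).IsHermitian := by
  ext x y
  simp [kronOp, (pauli_isHermitian _).apply]

lemma kronOp_anticommute {f g : ι → ℕ} (k : ι)
    (hk : pauli (f k) * pauli (g k) = -(pauli (g k) * pauli (f k)))
    (hcomm : ∀ q ≠ k, Commute (pauli (f q)) (pauli (g q))) :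
    kronOp f * kronOp g = -(kronOp g * kronOp f) := by
  ext x y
  rw [neg_apply, kronOp_mul_kronOp_apply, kronOp_mul_kronOp_apply,
    ← mul_prod_erase _ _ (mem_univ k), ← mul_prod_erase _ _ (mem_univ k), hk, neg_apply, neg_mul]
  congr 2
  exact prod_congr rfl fun q hq => by rw [(hcomm q (ne_of_mem_erase hq)).eq]

end Pauli

/-- Positive semidefinite matrices of trace one: the (possibly mixed) states. -/
structure IsDensityMatrix {m : Type*} [Fintype m] (ρ : Matrix m m ℂ) : Prop where
  posSemidef : ρ.PosSemidef
  trace_eq_one : ρ.trace = 1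

/-- The mean `Re tr(ρA)` of an observable `A` in the state `ρ`. The trace is already real when `ρ`
and `A` are Hermitian; taking its real part makes the mean a real functional of all matrices. -/
noncomputable def mean {m : Type*} [Fintype m] (ρ : Matrix m m ℂ) : Matrix m m ℂ →ₗ[ℝ] ℝ :=
  Complex.reLm ∘ₗ traceLinearMap m ℝ ℂ ∘ₗ LinearMap.mulLeft ℝ ρ

section Mean

variable {m : Type*} [Fintype m] {ρ : Matrix m m ℂ}

lemma mean_apply (A : Matrix m m ℂ) : mean ρ A = (ρ * A).trace.re := rfl

lemma mean_star_mul_self_nonneg (hρ : ρ.PosSemidef) (A : Matrix m m ℂ) :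
    0 ≤ mean ρ (star A * A) := by
  have h : (ρ * (star A * A)).trace = (A * ρ * Aᴴ).trace := by
    rw [star_eq_conjTranspose, ← Matrix.mul_assoc, trace_mul_comm, Matrix.mul_assoc]
  rw [mean_apply, h]
  exact (Complex.nonneg_iff.mp (hρ.mul_mul_conjTranspose_same A).trace_nonneg).1

lemma mean_one [DecidableEq m] (htr : ρ.trace = 1) : mean ρ 1 = 1 := by
  rw [mean_apply, mul_one, htr, Complex.one_re]

lemma ofReal_mean (hρ : ρ.IsHermitian) {A : Matrix m m ℂ} (hA : A.IsHermitian) :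
    (mean ρ A : ℂ) = (ρ * A).trace := by
  rw [mean_apply]
  refine Complex.conj_eq_iff_re.mp ?_
  rw [starRingEnd_apply, ← trace_conjTranspose, conjTranspose_mul, hρ.eq, hA.eq, trace_mul_comm]

end Mean

section Monogamy

variable {ι : Type*} [Fintype ι] [DecidableEq ι] {ρ : Matrix (ι → Fin 2) (ι → Fin 2) ℂ} {k l m : ι}

lemma corr_eq_mean (hkl : k ≠ l) (i j : ℕ) :
    corr ρ k l i j = mean ρ (kronOp (Pi.single k i + Pi.single l j)) := by
  rw [corr, mean_apply]
  congr 5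
  ext q
  rcases eq_or_ne q k with rfl | hq
  · simp [hkl]
  · simp [hq, Pi.single_apply]

lemma bloch_eq_mean (k : ι) (i : ℕ) : bloch ρ k i = mean ρ (kronOp (Pi.single k i)) := by
  rw [bloch, mean_apply]
  congr 5
  ext q
  rw [Pi.single_apply]

lemma kronOp_single_add_single_anticommute {t : ℕ → ι} {i j i' j' : ℕ} (hk : k ≠ t i)
    (hk' : k ≠ t i') (ht : t i = t i' → i = i') (hi : i ∈ Icc 1 3) (hi' : i' ∈ Icc 1 3)
    (hj : j ∈ Icc 1 3) (hj' : j' ∈ Icc 1 3) (hne : (i, j) ≠ (i', j')) :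
    kronOp (Pi.single k i + Pi.single (t i) j) * kronOp (Pi.single k i' + Pi.single (t i') j') =
      -(kronOp (Pi.single k i' + Pi.single (t i') j') *
        kronOp (Pi.single k i + Pi.single (t i) j)) := by
  rcases eq_or_ne i i' with rfl | hii'
  · have hjj' : j ≠ j' := fun h => hne (by rw [h])
    refine kronOp_anticommute (t i) ?_ fun q hq => ?_
    · simpa [hk.symm] using pauli_anticommute hj hj' hjj'
    · simp [hq]
  · refine kronOp_anticommute k ?_ fun q hq => ?_
    · simpa [hk, hk'] using pauli_anticommute hi hi' hii'
    · rcases eq_or_ne q (t i) with rfl | hqt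
      · simp [hk.symm, mt ht hii', pauli_zero]
      · simp [hq, hqt, pauli_zero]

theorem sum_sum_corr_sq_le_one (hρ : IsDensityMatrix ρ) {s u : Finset ℕ} (hs : s ⊆ Icc 1 3)
    (hu : u ⊆ Icc 1 3) {t : ℕ → ι} (ht : Set.InjOn t s) (hk : ∀ i ∈ s, k ≠ t i) :
    ∑ i ∈ s, ∑ j ∈ u, corr ρ k (t i) i j ^ 2 ≤ 1 := by
  calc ∑ i ∈ s, ∑ j ∈ u, corr ρ k (t i) i j ^ 2
      = ∑ i ∈ s, ∑ j ∈ u, mean ρ (kronOp (Pi.single k i + Pi.single (t i) j)) ^ 2 :=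
        sum_congr rfl fun i hi => sum_congr rfl fun j _ => by rw [corr_eq_mean (hk i hi)]
    _ = ∑ p ∈ s ×ˢ u, mean ρ (kronOp (Pi.single k p.1 + Pi.single (t p.1) p.2)) ^ 2 :=
        by rw [sum_product]
    _ ≤ 1 := by
      refine sum_sq_map_le_one_of_anticommute
        (mean_star_mul_self_nonneg hρ.posSemidef) (mean_one hρ.trace_eq_one)
        (fun _ _ => kronOp_isHermitian _) (fun _ _ => kronOp_mul_self _) ?_
      rintro ⟨i, j⟩ hp ⟨i', j'⟩ hp' hne
      obtain ⟨hi, hj⟩ := mem_product.mp hp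
      obtain ⟨hi', hj'⟩ := mem_product.mp hp'
      exact kronOp_single_add_single_anticommute (hk i hi) (hk i' hi') (ht hi hi')
        (hs hi) (hs hi') (hu hj) (hu hj') hne

lemma Mkl_le_two (hρ : IsDensityMatrix ρ) (hkl : k ≠ l) : Mkl ρ k l ≤ 2 := by
  have hrow : ∀ i ∈ Icc 1 2, ∑ j ∈ Icc 1 2, corr ρ k l i j ^ 2 ≤ 1 := fun i hi => by
    simpa using sum_sum_corr_sq_le_one (s := {i}) (u := Icc 1 2) (t := fun _ => l) hρ
      (singleton_subset_iff.mpr (Icc_subset_Icc_right (by norm_num) hi))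
      (Icc_subset_Icc_right (by norm_num)) (by simp) (fun _ _ => hkl)
  simpa [Mkl] using sum_le_sum hrow

theorem Mkl_add_Mkl_le_two (hρ : IsDensityMatrix ρ) (hkl : k ≠ l) (hkm : k ≠ m) (hlm : l ≠ m) :
    Mkl ρ k l + Mkl ρ k m ≤ 2 := by
  have hrows (p q : ι) (hp : k ≠ p) (hq : k ≠ q) (hpq : p ≠ q) :
      ∑ j ∈ Icc 1 2, corr ρ k p 1 j ^ 2 + ∑ j ∈ Icc 1 2, corr ρ k q 2 j ^ 2 ≤ 1 := by
    simpa using sum_sum_corr_sq_le_one (s := {1, 2}) (u := Icc 1 2)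
      (t := fun i => if i = 1 then p else q) hρ (by decide) (by decide)
      (by simp [Set.InjOn, hpq, hpq.symm]) (by simp [hp, hq])
  have hMkl (q : ι) :
      Mkl ρ k q = ∑ j ∈ Icc 1 2, corr ρ k q 1 j ^ 2 + ∑ j ∈ Icc 1 2, corr ρ k q 2 j ^ 2 := by
    rw [Mkl, sum_Icc_succ_top (by norm_num), Icc_self, sum_singleton]
  linarith [hMkl l, hMkl m, hrows l m hkl hkm hlm, hrows m l hkm hkl hlm.symm]

lemma Mkl_comm (hkl : k ≠ l) : Mkl ρ k l = Mkl ρ l k := by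
  simp only [Mkl, corr_eq_mean hkl, corr_eq_mean hkl.symm]
  rw [sum_comm]
  simp only [add_comm]

end Monogamy

section PairSums

lemma sum_le_card_of_pairwise_add_le_two {ι R : Type*} [CommRing R] [LinearOrder R]
    [IsStrictOrderedRing R] {s : Finset ι} {a : ι → R}
    (hs : s.card ≠ 1) (ha : (s : Set ι).Pairwise fun i j => a i + a j ≤ 2) :
    ∑ i ∈ s, a i ≤ s.card := by
  classical
  by_cases hle : ∀ i ∈ s, a i ≤ 1
  · simpa using sum_le_sum hle
  push Not at hle
  obtain ⟨i, hi, hai⟩ := hle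
  obtain ⟨j, hj, hji⟩ : ∃ j ∈ s, j ≠ i :=
    exists_mem_ne (by have := card_pos.mpr ⟨i, hi⟩; lia) i
  have hj' : j ∈ s.erase i := mem_erase.mpr ⟨hji, hj⟩
  have hrest : ∀ l ∈ (s.erase i).erase j, a l ≤ 1 := fun l hl => by
    obtain ⟨-, hli, hl⟩ : l ≠ j ∧ l ≠ i ∧ l ∈ s := by simpa using hl
    linarith [ha hi hl hli.symm]
  have hsum := sum_le_sum hrest
  have hij := ha hi hj hji.symm
  rw [sum_const, nsmul_one] at hsum
  have hcard : (((s.erase i).erase j).card : R) + 1 + 1 = s.card := by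
    exact_mod_cast (congrArg (· + 1) (card_erase_add_one hj')).trans (card_erase_add_one hi)
  rw [← add_sum_erase s a hi, ← add_sum_erase _ a hj']
  linarith

lemma two_mul_sum_lt_eq_sum_sum_erase {ι R : Type*} [Fintype ι] [LinearOrder ι]
    [NonAssocSemiring R] {a : ι → ι → R} (ha : ∀ i j, i ≠ j → a i j = a j i) :
    2 * ∑ p : ι × ι with p.1 < p.2, a p.1 p.2 = ∑ i, ∑ j ∈ univ.erase i, a i j := by
  have hswap : ∑ p : ι × ι with p.2 < p.1, a p.1 p.2 = ∑ p : ι × ι with p.1 < p.2, a p.1 p.2 :=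
    sum_nbij' Prod.swap Prod.swap (by simp) (by simp) (by simp) (by simp)
      fun p hp => ha _ _ (by simpa using (mem_filter.mp hp).2.ne')
  calc 2 * ∑ p : ι × ι with p.1 < p.2, a p.1 p.2
      = ∑ p : ι × ι with p.1 < p.2 ∨ p.2 < p.1, a p.1 p.2 := by
        rw [filter_or, sum_union (disjoint_filter.mpr fun _ _ h => h.not_gt), hswap, two_mul]
    _ = ∑ i, ∑ j ∈ univ.erase i, a i j := by
        simp only [← ne_iff_lt_or_gt, sum_filter, Fintype.sum_prod_type]
        refine sum_congr rfl fun i _ => ?_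
        rw [← filter_ne, sum_filter]

end PairSums

/-- Upper bound on the total of `M_{kl}` over the partners `l` of a given qubit `k` inside a block
of `s` qubits: monogamy gives one per partner, except that a single partner may reach `2`. -/
def partnerBound (s : ℕ) : ℕ := if s = 2 then 2 else s - 1

lemma sum_erase_Mkl_le {ι : Type*} [Fintype ι] [DecidableEq ι]
    {ρ : Matrix (ι → Fin 2) (ι → Fin 2) ℂ} (hρ : IsDensityMatrix ρ) {S : Finset ι} {k : ι}
    (hk : k ∈ S) : ∑ l ∈ S.erase k, Mkl ρ k l ≤ partnerBound S.card := by
  have hcard := card_erase_add_one hk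
  by_cases hS : S.card = 2
  · obtain ⟨l, hl⟩ := card_eq_one.mp (show (S.erase k).card = 1 by lia)
    have hlk : l ≠ k := ne_of_mem_erase (hl ▸ mem_singleton_self l)
    simpa [hl, hS, partnerBound] using Mkl_le_two hρ hlk.symm
  · rw [partnerBound, if_neg hS, ← card_erase_of_mem hk]
    exact sum_le_card_of_pairwise_add_le_two (by lia) fun l hl m hm hlm =>
      Mkl_add_Mkl_le_two hρ (ne_of_mem_erase hl).symm (ne_of_mem_erase hm).symm hlm

section Partition

variable {n k : ℕ} {P : Fin k → Finset (Fin n)}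

lemma IsPartition.eq_of_mem (hP : IsPartition P) {q : Fin n} {m m' : Fin k} (hm : q ∈ P m)
    (hm' : q ∈ P m') : m = m' := by
  by_contra hne
  exact disjoint_left.mp (hP.2.1 m m' hne) hm hm'

/-- The points of the blocks of a partition, tagged by their block, are the points of `Fin n`. -/
noncomputable def IsPartition.sigmaEquiv (hP : IsPartition P) : (Σ m, P m) ≃ Fin n :=
  Equiv.ofBijective (fun q => q.2.1) <| by
    refine ⟨?_, fun q => ?_⟩
    · rintro ⟨m, q, hq⟩ ⟨m', q', hq'⟩ rfl
      obtain rfl := hP.eq_of_mem hq hq'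
      rfl
    · obtain ⟨m, hm⟩ := hP.2.2 q
      exact ⟨⟨m, q, hm⟩, rfl⟩

/-- A bit string on all qubits amounts to one bit string on each block of a partition. -/
noncomputable def IsPartition.restrictEquiv (hP : IsPartition P) :
    (Fin n → Fin 2) ≃ ((m : Fin k) → P m → Fin 2) :=
  (hP.sigmaEquiv.symm.arrowCongr (Equiv.refl (Fin 2))).trans (Equiv.piCurry fun _ _ => Fin 2)

lemma IsPartition.restrictEquiv_apply (hP : IsPartition P) (x : Fin n → Fin 2) (m : Fin k) :
    hP.restrictEquiv x m = restrictB (P m) x := rfl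

@[to_additive]
lemma IsPartition.prod_prod_coe {M : Type*} [CommMonoid M] (hP : IsPartition P) (g : Fin n → M) :
    ∏ m, ∏ q : P m, g q = ∏ q, g q := by
  rw [← hP.sigmaEquiv.prod_comp g, Fintype.prod_sigma]
  rfl

lemma IsPartition.sum_card (hP : IsPartition P) : ∑ m, (P m).card = n := by
  simpa using hP.sum_sum_coe fun _ => (1 : ℕ)

end Partition

/-- `ρ` is the tensor product, under the canonical qubit reordering, of states on the blocks of
`P`: the analogue of `IsProductOver` for mixed states. -/
def IsProductDensity {n k : ℕ} (ρ : Matrix (Fin n → Fin 2) (Fin n → Fin 2) ℂ)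
    (P : Fin k → Finset (Fin n)) : Prop :=
  ∃ σ : (m : Fin k) → Matrix (P m → Fin 2) (P m → Fin 2) ℂ,
    (∀ m, IsDensityMatrix (σ m)) ∧
      ∀ x y, ρ x y = ∏ m, σ m (restrictB (P m) x) (restrictB (P m) y)

section Product

variable {n k : ℕ} {ρ : Matrix (Fin n → Fin 2) (Fin n → Fin 2) ℂ} {P : Fin k → Finset (Fin n)}

lemma IsPartition.trace_mul_kronOp (hP : IsPartition P)
    {σ : (m : Fin k) → Matrix (P m → Fin 2) (P m → Fin 2) ℂ}
    (hσ : ∀ x y, ρ x y = ∏ m, σ m (restrictB (P m) x) (restrictB (P m) y)) (f : Fin n → ℕ) :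
    (ρ * kronOp f).trace = ∏ m, (σ m * kronOp fun q : P m => f q).trace := by
  have hterm (x y : Fin n → Fin 2) : ρ x y * kronOp f y x =
      ∏ m, σ m (restrictB (P m) x) (restrictB (P m) y) *
        kronOp (fun q : P m => f q) (restrictB (P m) y) (restrictB (P m) x) := by
    rw [prod_mul_distrib, hσ, kronOp, of_apply, ← hP.prod_prod_coe]
    rfl
  simp only [trace, diag_apply, mul_apply, hterm, prod_univ_sum, Fintype.piFinset_univ,
    ← hP.restrictEquiv_apply]
  rw [hP.restrictEquiv.sum_comp fun X => ∑ y, ∏ m, σ m (X m) (hP.restrictEquiv y m) *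
    kronOp (fun q : P m => f q) (hP.restrictEquiv y m) (X m)]
  exact sum_congr rfl fun X _ => hP.restrictEquiv.sum_comp fun Y => ∏ m, σ m (X m) (Y m) *
    kronOp (fun q : P m => f q) (Y m) (X m)

lemma IsProductDensity.trace_mul_kronOp_add (h : IsProductDensity ρ P) (hP : IsPartition P)
    {f g : Fin n → ℕ} (hfg : ∀ m, (∀ q ∈ P m, f q = 0) ∨ ∀ q ∈ P m, g q = 0) :
    (ρ * kronOp (f + g)).trace = (ρ * kronOp f).trace * (ρ * kronOp g).trace := by
  obtain ⟨σ, hσ, hρ⟩ := h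
  have hone (m : Fin k) : (σ m * kronOp 0).trace = 1 := by
    rw [kronOp_zero, mul_one, (hσ m).trace_eq_one]
  simp only [hP.trace_mul_kronOp hρ, ← prod_mul_distrib]
  refine prod_congr rfl fun m _ => ?_
  rcases hfg m with hf | hg
  · have hf_zero : (fun q : P m => f q) = 0 := funext fun q => hf q q.2
    have hfg_eq : (fun q : P m => (f + g) q) = fun q : P m => g q := by
      ext q; simp [hf q q.2]
    rw [hf_zero, hfg_eq, hone, one_mul]
  · have hg_zero : (fun q : P m => g q) = 0 := funext fun q => hg q q.2
    have hfg_eq : (fun q : P m => (f + g) q) = fun q : P m => f q := by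
      ext q; simp [hg q q.2]
    rw [hg_zero, hfg_eq, hone, mul_one]

lemma IsProductDensity.corr_eq_bloch_mul_bloch (h : IsProductDensity ρ P) (hρ : ρ.IsHermitian)
    (hP : IsPartition P) {q r : Fin n} (hqr : ∀ m, q ∈ P m → r ∉ P m) (i j : ℕ) :
    corr ρ q r i j = bloch ρ q i * bloch ρ r j := by
  obtain ⟨m, hm⟩ := hP.2.2 q
  have hne : q ≠ r := by
    rintro rfl
    exact hqr m hm hm
  have hsupp (m : Fin k) : (∀ p ∈ P m, (Pi.single q i : Fin n → ℕ) p = 0) ∨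
      ∀ p ∈ P m, (Pi.single r j : Fin n → ℕ) p = 0 := by
    by_cases hq : q ∈ P m
    · exact .inr fun p hp => Pi.single_eq_of_ne (ne_of_mem_of_not_mem hp (hqr m hq)) _
    · exact .inl fun p hp => Pi.single_eq_of_ne (ne_of_mem_of_not_mem hp hq) _
  rw [corr_eq_mean hne, bloch_eq_mean, bloch_eq_mean]
  apply Complex.ofReal_injective
  rw [Complex.ofReal_mul, ofReal_mean hρ (kronOp_isHermitian _),
    ofReal_mean hρ (kronOp_isHermitian _), ofReal_mean hρ (kronOp_isHermitian _),
    h.trace_mul_kronOp_add hP hsupp]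

lemma IsProductDensity.Mkl_eq_zero (h : IsProductDensity ρ P) (hρ : ρ.IsHermitian)
    (hpb : PreferredBasis ρ) (hP : IsPartition P) {q r : Fin n} (hqr : ∀ m, q ∈ P m → r ∉ P m) :
    Mkl ρ q r = 0 := by
  simp [Mkl, h.corr_eq_bloch_mul_bloch hρ hP hqr, sum_Icc_succ_top, (hpb q).1, (hpb q).2]

theorem IsProductDensity.two_mul_Mtot_le (h : IsProductDensity ρ P) (hρ : IsDensityMatrix ρ)
    (hpb : PreferredBasis ρ) (hP : IsPartition P) :
    2 * Mtot ρ ≤ ∑ m, ((P m).card * partnerBound (P m).card : ℝ) := by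
  have hblock {m : Fin k} {q : Fin n} (hq : q ∈ P m) :
      ∑ r ∈ univ.erase q, Mkl ρ q r = ∑ r ∈ (P m).erase q, Mkl ρ q r := by
    refine (sum_subset (erase_subset_erase q (subset_univ _)) fun r hr hr' => ?_).symm
    have hrm : r ∉ P m := fun hrm => hr' (mem_erase.mpr ⟨ne_of_mem_erase hr, hrm⟩)
    exact h.Mkl_eq_zero hρ.posSemidef.isHermitian hpb hP fun m' hq' =>
      hP.eq_of_mem hq hq' ▸ hrm
  calc 2 * Mtot ρ
      = ∑ q, ∑ r ∈ univ.erase q, Mkl ρ q r :=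
        two_mul_sum_lt_eq_sum_sum_erase fun _ _ => Mkl_comm
    _ = ∑ m, ∑ q : P m, ∑ r ∈ univ.erase q.1, Mkl ρ q r := (hP.sum_sum_coe _).symm
    _ ≤ ∑ m, ∑ _q : P m, (partnerBound (P m).card : ℝ) :=
        sum_le_sum fun m _ => sum_le_sum fun q _ => by
          rw [hblock q.2]
          exact sum_erase_Mkl_le hρ q.2
    _ = ∑ m, ((P m).card * partnerBound (P m).card : ℝ) := by simp

theorem IsProductDensity.Mtot_le_two {ρ : Matrix (Fin 3 → Fin 2) (Fin 3 → Fin 2) ℂ}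
    {P : Fin 2 → Finset (Fin 3)} (h : IsProductDensity ρ P) (hρ : IsDensityMatrix ρ)
    (hpb : PreferredBasis ρ) (hP : IsPartition P) : Mtot ρ ≤ 2 := by
  have hM := h.two_mul_Mtot_le hρ hpb hP
  have hsum := hP.sum_card
  have h₀ := (hP.1 0).card_pos
  have h₁ := (hP.1 1).card_pos
  rw [Fin.sum_univ_two] at hM hsum
  obtain ⟨hc₀, hc₁⟩ | ⟨hc₀, hc₁⟩ :
      (P 0).card = 1 ∧ (P 1).card = 2 ∨ (P 0).card = 2 ∧ (P 1).card = 1 := by lia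
  all_goals
    norm_num [hc₀, hc₁, partnerBound] at hM
    linarith

theorem IsProductDensity.Mtot_le_four {ρ : Matrix (Fin 4 → Fin 2) (Fin 4 → Fin 2) ℂ}
    {P : Fin 2 → Finset (Fin 4)} (h : IsProductDensity ρ P) (hρ : IsDensityMatrix ρ)
    (hpb : PreferredBasis ρ) (hP : IsPartition P) : Mtot ρ ≤ 4 := by
  have hM := h.two_mul_Mtot_le hρ hpb hP
  have hsum := hP.sum_card
  have h₀ := (hP.1 0).card_pos
  have h₁ := (hP.1 1).card_pos
  rw [Fin.sum_univ_two] at hM hsum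
  obtain ⟨hc₀, hc₁⟩ | ⟨hc₀, hc₁⟩ | ⟨hc₀, hc₁⟩ : (P 0).card = 1 ∧ (P 1).card = 3 ∨
      (P 0).card = 2 ∧ (P 1).card = 2 ∨ (P 0).card = 3 ∧ (P 1).card = 1 := by lia
  all_goals
    norm_num [hc₀, hc₁, partnerBound] at hM
    linarith

end Product

section Pure

lemma pureDensity_eq_vecMulVec {ι : Type*} [Fintype ι] [DecidableEq ι] (ψ : (ι → Fin 2) → ℂ) :
    pureDensity ψ = vecMulVec ψ (star ψ) := rfl

lemma UnitVec.isDensityMatrix {ι : Type*} [Fintype ι] [DecidableEq ι] {ψ : (ι → Fin 2) → ℂ}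
    (hψ : UnitVec ψ) : IsDensityMatrix (pureDensity ψ) where
  posSemidef := by
    rw [pureDensity_eq_vecMulVec]
    exact posSemidef_vecMulVec_self_star ψ
  trace_eq_one := by
    simp only [trace, diag_apply, pureDensity, of_apply, Complex.mul_conj]
    exact_mod_cast hψ

lemma IsProductOver.isProductDensity {n k : ℕ} {ψ : (Fin n → Fin 2) → ℂ}
    {P : Fin k → Finset (Fin n)} (h : IsProductOver ψ P) : IsProductDensity (pureDensity ψ) P := by
  obtain ⟨φ, hφ, hψ⟩ := h
  refine ⟨fun m => pureDensity (φ m), fun m => (hφ m).isDensityMatrix, fun x y => ?_⟩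
  simp [pureDensity, hψ, prod_mul_distrib]

end Pure

theorem genuinely_entangled_small_cases_general :
    (∀ ρ : Matrix (Fin 3 → Fin 2) (Fin 3 → Fin 2) ℂ, IsDensityMatrix ρ → PreferredBasis ρ →
      Mtot ρ > 2 → ¬ ∃ P : Fin 2 → Finset (Fin 3), IsPartition P ∧ IsProductDensity ρ P) ∧
    (∀ ρ : Matrix (Fin 4 → Fin 2) (Fin 4 → Fin 2) ℂ, IsDensityMatrix ρ → PreferredBasis ρ →
      Mtot ρ > 4 → ¬ ∃ P : Fin 2 → Finset (Fin 4), IsPartition P ∧ IsProductDensity ρ P) :=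
  ⟨fun _ hρ hpb hM ⟨_, hP, h⟩ => (h.Mtot_le_two hρ hpb hP).not_gt hM,
    fun _ hρ hpb hM ⟨_, hP, h⟩ => (h.Mtot_le_four hρ hpb hP).not_gt hM⟩

/-- Proposition 5, small cases: for a preferred-basis pure
3-qubit state, `M > 2` implies genuine 3-partite entanglement; for a
preferred-basis pure 4-qubit state, `M > 4` implies genuine 4-partite
entanglement (no bipartition product in either case). -/
theorem genuinely_entangled_small_cases :
    (∀ ψ : (Fin 3 → Fin 2) → ℂ, UnitVec ψ → PreferredBasis (pureDensity ψ) →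
      Mtot (pureDensity ψ) > 2 →
      ¬ ∃ P : Fin 2 → Finset (Fin 3), IsPartition P ∧ IsProductOver ψ P) ∧
    (∀ ψ : (Fin 4 → Fin 2) → ℂ, UnitVec ψ → PreferredBasis (pureDensity ψ) →
      Mtot (pureDensity ψ) > 4 →
      ¬ ∃ P : Fin 2 → Finset (Fin 4), IsPartition P ∧ IsProductOver ψ P) :=
  ⟨fun _ hψ hpb hM ⟨P, hP, h⟩ => genuinely_entangled_small_cases_general.1 _ hψ.isDensityMatrix
      hpb hM ⟨P, hP, h.isProductDensity⟩,
    fun _ hψ hpb hM ⟨P, hP, h⟩ => genuinely_entangled_small_cases_general.2 _ hψ.isDensityMatrix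
      hpb hM ⟨P, hP, h.isProductDensity⟩⟩
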